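/- Let Ω ⊂ ℝ² be a closed discrete set and let a = (a₁, a₂) : ℝ² → ℝ² be locally integrable on ℝ² and infinitely differentiable on ℝ² ∖ Ω. Assume that the distributional curl of a vanishes on all of ℝ², i.e. for every compactly supported smooth function φ : ℝ² → ℝ one has ∫_{ℝ²} ( a₂(x,y)·∂φ/∂x(x,y) − a₁(x,y)·∂φ/∂y(x,y) ) dx dy = 0. Then there exists a real-valued function f that is infinitely differentiable on the open set ℝ² ∖ Ω and satisfies ∇f = a on ℝ² ∖ Ω. -/

import Mathlib

/-!
The field `a` is approximated by its mollifications `aₙ = ρₙ ⋆ a`. Differentiating under the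
convolution and testing the hypothesis against the reflected translates `s ↦ -ρₙ (x - s)` shows
that each `aₙ` is a smooth curl-free field on the whole plane (`fderiv_convolution_symm`). The
Poincaré lemma on the convex set `ℝ²` gives `aₙ = ∇fₙ`. Around each point of `Ωᶜ` the field `a` is
continuous, so `aₙ → a` uniformly near that point (`exists_ball_tendstoUniformlyOn_mollify`).
Since `Ω` is countable, `Ωᶜ` is connected, so after subtracting constants the `fₙ` converge
on `Ωᶜ` to a function with gradient `a` (`exists_primitive_of_locally_tendstoUniformlyOn`). In this
way periods around the points of `Ω` never have to be computed: they vanish because the `fₙ` are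
globally defined. Smoothness of the limit follows from that of its derivative.
-/

open MeasureTheory

open Filter Topology Metric Set ContinuousLinearMap

open scoped Convolution ContDiff

/-- On a connected open set, a locally uniform limit of exact `1`-forms is exact. No convergence
of the primitives `f n` is assumed: they are renormalised to vanish at a base point, and the set
where the renormalised sequence is Cauchy is then open and closed in `U`. -/
theorem exists_primitive_of_locally_tendstoUniformlyOn
    {E : Type*} [NormedAddCommGroup E] [NormedSpace ℝ E] {U : Set E}
    (hUc : IsPreconnected U) {f : ℕ → E → ℝ} {η' : ℕ → E → E →L[ℝ] ℝ}
    {η : E → E →L[ℝ] ℝ} (hf : ∀ n, ∀ x ∈ U, HasFDerivAt (f n) (η' n x) x)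
    (hη : ∀ x ∈ U, ∃ r > 0, ball x r ⊆ U ∧ TendstoUniformlyOn η' η atTop (ball x r)) :
    ∃ g : E → ℝ, ∀ x ∈ U, HasFDerivAt g (η x) x := by
  rcases U.eq_empty_or_nonempty with rfl | ⟨x₀, hx₀⟩
  · simp
  let h : ℕ → E → ℝ := fun n x ↦ f n x - f n x₀
  have hh : ∀ n, ∀ x ∈ U, HasFDerivAt (h n) (η' n x) x := fun n x hx ↦ (hf n x hx).sub_const _
  let t : Set E := {y | y ∈ U ∧ Cauchy (map (fun n ↦ h n y) atTop)}
  have step : ∀ x ε, x ∈ t → ball x ε ⊆ U → TendstoUniformlyOn η' η atTop (ball x ε) →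
      ball x ε ⊆ t := fun x ε hx hU hu y hy ↦
    ⟨hU hy, (uniformCauchySeqOn_ball_of_fderiv hu.uniformCauchySeqOn
      (fun n y hy ↦ hh n y (hU hy)) hx.2).cauchy_map hy⟩
  have ht_open : IsOpen t := by
    rw [Metric.isOpen_iff]
    intro x hx
    obtain ⟨r, hr, hrU, hu⟩ := hη x hx.1
    exact ⟨r, hr, step x r hx hrU hu⟩
  have hx₀t : x₀ ∈ t := ⟨hx₀, by
    simpa [h] using (tendsto_const_nhds (x := (0 : ℝ)) (f := (atTop : Filter ℕ))).cauchy_map⟩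
  have hUt : U ⊆ t := by
    refine hUc.subset_of_closure_inter_subset ht_open ⟨x₀, hx₀, hx₀t⟩ ?_
    rintro x ⟨hxt, hxU⟩
    obtain ⟨r, hr, hrU, hu⟩ := hη x hxU
    obtain ⟨y, hyt, hxy⟩ := Metric.mem_closure_iff.1 hxt _ (half_pos hr)
    have hsub : ball y (r / 2) ⊆ ball x r := by
      apply Metric.ball_subset_ball'
      rw [dist_comm]
      linarith
    exact step y (r / 2) hyt (hsub.trans hrU) (hu.mono hsub) (Metric.mem_ball.2 hxy)
  have hlim : ∀ x ∈ U, ∃ l, Tendsto (fun n ↦ h n x) atTop (𝓝 l) := fun x hx ↦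
    cauchy_map_iff_exists_tendsto.1 (hUt hx).2
  choose! g hg using hlim
  refine ⟨g, fun x hx ↦ ?_⟩
  obtain ⟨r, hr, hrU, hu⟩ := hη x hx
  exact hasFDerivAt_of_tendstoUniformlyOn isOpen_ball hu (fun n y hy ↦ hh n y (hrU hy))
    (fun y hy ↦ hg y (hrU hy)) (mem_ball_self hr)

/-- Mollifications converge uniformly near every point of an open set on which the function is
continuous. -/
theorem exists_ball_tendstoUniformlyOn_mollify {a : ℝ × ℝ → ℝ × ℝ} {U : Set (ℝ × ℝ)}
    (hU : IsOpen U) (ha : ContinuousOn a U) (hm : AEStronglyMeasurable a volume)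
    (φ : ℕ → ContDiffBump (0 : ℝ × ℝ)) (hφ : Tendsto (fun n ↦ (φ n).rOut) atTop (𝓝 0))
    {x : ℝ × ℝ} (hx : x ∈ U) :
    ∃ r > 0, ball x r ⊆ U ∧ TendstoUniformlyOn
      (fun n ↦ (φ n).normed volume ⋆[lsmul ℝ ℝ, volume] a) a atTop (ball x r) := by
  obtain ⟨R, hR, hRU⟩ := Metric.nhds_basis_closedBall.mem_iff.1 (hU.mem_nhds hx)
  have huc : UniformContinuousOn a (closedBall x R) :=
    (isCompact_closedBall x R).uniformContinuousOn_of_continuous (ha.mono hRU)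
  refine ⟨R / 2, half_pos hR,
    (ball_subset_closedBall.trans (closedBall_subset_closedBall (by linarith))).trans hRU, ?_⟩
  rw [Metric.tendstoUniformlyOn_iff]
  intro ε hε
  obtain ⟨δ, hδ, hδa⟩ := Metric.uniformContinuousOn_iff.1 huc (ε / 2) (half_pos hε)
  filter_upwards [hφ.eventually (gt_mem_nhds (lt_min hδ (half_pos hR)))] with n hn y hy
  rw [dist_comm]
  refine lt_of_le_of_lt ((φ n).dist_normed_convolution_le hm (ε := ε / 2) fun z hz ↦ ?_)
    (half_lt_self hε)
  have hzy : dist z y < min δ (R / 2) := (mem_ball.1 hz).trans hn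
  have hyx : dist y x < R / 2 := mem_ball.1 hy
  refine (hδa z ?_ y ?_ (hzy.trans_le (min_le_left _ _))).le
  · have := dist_triangle z y x
    have := hzy.trans_le (min_le_right _ _)
    rw [mem_closedBall]
    linarith
  · rw [mem_closedBall]
    linarith

/-- The `1`-form `v.1 dx + v.2 dy` with the components of `v` as coefficients, as a continuous
linear function of `v`. -/
noncomputable def planarForm : ℝ × ℝ →L[ℝ] (ℝ × ℝ →L[ℝ] ℝ) :=
  (fst ℝ ℝ ℝ).smulRight (fst ℝ ℝ ℝ) + (snd ℝ ℝ ℝ).smulRight (snd ℝ ℝ ℝ)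

theorem planarForm_apply (v : ℝ × ℝ) :
    planarForm v = v.1 • fst ℝ ℝ ℝ + v.2 • snd ℝ ℝ ℝ := rfl

theorem planarForm_comp_symm {D : ℝ × ℝ →L[ℝ] ℝ × ℝ} (hD : (D (1, 0)).2 = (D (0, 1)).1)
    (u v : ℝ × ℝ) : planarForm (D u) v = planarForm (D v) u := by
  have key : ∀ w : ℝ × ℝ, D w = w.1 • D (1, 0) + w.2 • D (0, 1) := by
    intro w
    rw [← map_smul, ← map_smul, ← map_add]
    simp
  rw [key u, key v]
  simp only [planarForm_apply, add_apply, smul_apply, coe_fst', coe_snd',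
    Prod.fst_add, Prod.snd_add, Prod.smul_fst, Prod.smul_snd, smul_eq_mul]
  rw [hD]
  ring

/-- A mollification of a field with vanishing distributional curl has vanishing curl: its curl
at `x` is the distributional curl tested against `s ↦ -ρ (x - s)`. -/
theorem fderiv_convolution_symm {a : ℝ × ℝ → ℝ × ℝ} (ha : LocallyIntegrable a volume)
    (hcurl : ∀ φ : ℝ × ℝ → ℝ, ContDiff ℝ (⊤ : ℕ∞) φ → HasCompactSupport φ →
      ∫ p, ((a p).2 * fderiv ℝ φ p (1, 0) - (a p).1 * fderiv ℝ φ p (0, 1)) = 0)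
    {ρ : ℝ × ℝ → ℝ} (hρ : ContDiff ℝ (⊤ : ℕ∞) ρ) (hρc : HasCompactSupport ρ) (x : ℝ × ℝ) :
    (fderiv ℝ (ρ ⋆[lsmul ℝ ℝ, volume] a) x (1, 0)).2 =
      (fderiv ℝ (ρ ⋆[lsmul ℝ ℝ, volume] a) x (0, 1)).1 := by
  have hρ1 : ContDiff ℝ 1 ρ := hρ.of_le (by exact_mod_cast le_top)
  rw [(hρc.hasFDerivAt_convolution_left (lsmul ℝ ℝ) hρ1 ha x).fderiv]
  have hconv : ConvolutionExistsAt (fderiv ℝ ρ) a x ((lsmul ℝ ℝ).precompL (ℝ × ℝ)) volume :=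
    (hρc.fderiv ℝ).convolutionExists_left _ (hρ1.continuous_fderiv one_ne_zero) ha x
  have hint : Integrable
      (fun s ↦ ((lsmul ℝ ℝ).precompL (ℝ × ℝ) (fderiv ℝ ρ (x - s)) (a s) :
        ℝ × ℝ →L[ℝ] ℝ × ℝ)) volume := hconv.integrable_swap
  have hD : ∀ u : ℝ × ℝ, Integrable (fun s ↦ fderiv ℝ ρ (x - s) u • a s) volume ∧
      (fderiv ℝ ρ ⋆[(lsmul ℝ ℝ).precompL (ℝ × ℝ), volume] a) x u =
        ∫ s, fderiv ℝ ρ (x - s) u • a s := by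
    intro u
    refine ⟨by simpa using hint.apply_continuousLinearMap u, ?_⟩
    rw [convolution_eq_swap, ContinuousLinearMap.integral_apply hint]
    simp
  obtain ⟨hi₁, he₁⟩ := hD (1, 0)
  obtain ⟨hi₂, he₂⟩ := hD (0, 1)
  have h₁ : (∫ s, fderiv ℝ ρ (x - s) (1, 0) • a s).2 =
      ∫ s, (a s).2 * fderiv ℝ ρ (x - s) (1, 0) := by
    refine ((snd ℝ ℝ ℝ).integral_comp_comm hi₁).symm.trans ?_
    simp [mul_comm]
  have h₂ : (∫ s, fderiv ℝ ρ (x - s) (0, 1) • a s).1 =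
      ∫ s, (a s).1 * fderiv ℝ ρ (x - s) (0, 1) := by
    refine ((fst ℝ ℝ ℝ).integral_comp_comm hi₂).symm.trans ?_
    simp [mul_comm]
  have hj₁ : Integrable (fun s ↦ (a s).2 * fderiv ℝ ρ (x - s) (1, 0)) volume := by
    simpa [mul_comm] using (snd ℝ ℝ ℝ).integrable_comp hi₁
  have hj₂ : Integrable (fun s ↦ (a s).1 * fderiv ℝ ρ (x - s) (0, 1)) volume := by
    simpa [mul_comm] using (fst ℝ ℝ ℝ).integrable_comp hi₂
  have htest : ∀ s, fderiv ℝ (fun s ↦ -ρ (x - s)) s = fderiv ℝ ρ (x - s) := by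
    intro s
    have hd := ((hρ1.differentiable one_ne_zero (x - s)).hasFDerivAt.comp s
      ((hasFDerivAt_id s).const_sub x)).neg
    refine hd.fderiv.trans ?_
    ext <;> simp
  have h0 := hcurl (fun s ↦ -ρ (x - s)) (hρ.comp (contDiff_const.sub contDiff_id)).neg
    (hρc.comp_homeomorph (Homeomorph.subLeft x)).neg
  simp only [htest] at h0
  rw [integral_sub hj₁ hj₂, sub_eq_zero] at h0
  rw [he₁, he₂, h₁, h₂, h0]

/-- If a locally integrable vector field `a` on `ℝ²`, smooth away from a closed discrete
set `Ω`, has vanishing distributional curl on all of `ℝ²`, then `a` is a gradient of a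
smooth function on `ℝ² ∖ Ω`. -/
theorem exists_potential_of_distributional_curl_zero
    (Ω : Set (ℝ × ℝ)) (hΩclosed : IsClosed Ω)
    (hΩdisc : ∀ x : ℝ × ℝ, ¬ AccPt x (Filter.principal Ω))
    (a : ℝ × ℝ → ℝ × ℝ)
    (ha_loc : LocallyIntegrable a volume)
    (ha_smooth : ContDiffOn ℝ (⊤ : ℕ∞) a Ωᶜ)
    (hcurl : ∀ φ : ℝ × ℝ → ℝ, ContDiff ℝ (⊤ : ℕ∞) φ → HasCompactSupport φ →
      ∫ p, ((a p).2 * fderiv ℝ φ p (1, 0) - (a p).1 * fderiv ℝ φ p (0, 1)) = 0) :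
    ∃ f : ℝ × ℝ → ℝ, ContDiffOn ℝ (⊤ : ℕ∞) f Ωᶜ ∧
      ∀ p ∈ Ωᶜ, HasFDerivAt f
        ((a p).1 • ContinuousLinearMap.fst ℝ ℝ ℝ + (a p).2 • ContinuousLinearMap.snd ℝ ℝ ℝ) p := by
  have hU : IsOpen Ωᶜ := hΩclosed.isOpen_compl
  have hΩcount : Ω.Countable := by
    refine (HereditarilyLindelofSpace.isLindelof Ω).countable_of_isDiscrete ?_
    rw [isDiscrete_iff_nhdsNE]
    intro x _
    have := hΩdisc x
    rwa [AccPt, neBot_iff, not_not] at this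
  have hconn : IsPreconnected Ωᶜ :=
    (hΩcount.isConnected_compl_of_one_lt_rank (by simp [one_add_one_eq_two])).isPreconnected
  let φ : ℕ → ContDiffBump (0 : ℝ × ℝ) := fun n ↦
    ⟨1 / ((n : ℝ) + 1) / 2, 1 / ((n : ℝ) + 1), by positivity, half_lt_self (by positivity)⟩
  have hφ : Tendsto (fun n ↦ (φ n).rOut) atTop (𝓝 0) := tendsto_one_div_add_atTop_nhds_zero_nat
  let b : ℕ → ℝ × ℝ → ℝ × ℝ := fun n ↦ (φ n).normed volume ⋆[lsmul ℝ ℝ, volume] a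
  have hb : ∀ n, Differentiable ℝ (b n) := fun n x ↦
    ((φ n).hasCompactSupport_normed.hasFDerivAt_convolution_left (lsmul ℝ ℝ)
      (φ n).contDiff_normed ha_loc x).differentiableAt
  have hprim : ∀ n, ∃ f : ℝ × ℝ → ℝ, ∀ x ∈ (univ : Set (ℝ × ℝ)),
      HasFDerivAt f (planarForm (b n x)) x := by
    intro n
    refine convex_univ.exists_forall_hasFDerivAt_of_fderiv_symmetric isOpen_univ
      (fun x _ ↦ (planarForm.differentiableAt.comp x (hb n x)).differentiableWithinAt) ?_
    intro x _ u v
    have hd : fderiv ℝ (fun y ↦ planarForm (b n y)) x = planarForm ∘L fderiv ℝ (b n) x :=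
      (planarForm.hasFDerivAt.comp x (hb n x).hasFDerivAt).fderiv
    rw [hd]
    exact planarForm_comp_symm (fderiv_convolution_symm ha_loc hcurl (φ n).contDiff_normed
      (φ n).hasCompactSupport_normed x) u v
  choose f hf using hprim
  obtain ⟨g, hg⟩ := exists_primitive_of_locally_tendstoUniformlyOn (η := fun x ↦ planarForm (a x))
    hconn (fun n x _ ↦ hf n x (mem_univ x)) fun x hx ↦ by
      obtain ⟨r, hr, hrU, hu⟩ := exists_ball_tendstoUniformlyOn_mollify hU ha_smooth.continuousOn
        ha_loc.aestronglyMeasurable φ hφ hx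
      exact ⟨r, hr, hrU, planarForm.uniformContinuous.comp_tendstoUniformlyOn hu⟩
  refine ⟨g, ?_, hg⟩
  refine (contDiffOn_infty_iff_fderiv_of_isOpen hU).2
    ⟨fun x hx ↦ (hg x hx).differentiableAt.differentiableWithinAt, ?_⟩
  exact (planarForm.contDiff.comp_contDiffOn ha_smooth).congr fun x hx ↦ (hg x hx).fderiv
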